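/- arXiv:1712.03345 — 5 statements merged into one kernel-verified Lean document; each statement's English description precedes it below -/
import Mathlib

section
/- Let S_a and S_b be integers with S_a > 1, S_b > 1 and gcd(S_a, S_b) = 1, and let S be the corresponding homomorphism on the golden mean language. Then the set of positive integers not belonging to S(L_GM) is finite, and its largest element (the Frobenius number of S(L_GM)) equals S_a·(S_a − 3) + S_b·(S_a − 1); that is, S_a² + S_a·S_b − 3·S_a − S_b is not of the form S(w) for any w in L_GM, while every strictly larger positive integer is. -/
/-- The golden mean language: nonempty words over `{a,b}` (here `a = false`,
`b = true`) in which the factor `bb` does not occur. -/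
def goldenMeanLang : Set (List Bool) :=
  {w | w ≠ [] ∧ ¬ [true, true] <:+: w}

/-- The homomorphism determined by `Sa = S(a)`, `Sb = S(b)`:
`S(w) = N_a(w)·Sa + N_b(w)·Sb`. -/
def wordValGM (Sa Sb : ℕ) (w : List Bool) : ℕ :=
  w.count false * Sa + w.count true * Sb

/-!
A word `w` avoids `bb` exactly when `wa` is a concatenation of the blocks `a` and `ba`. Hence a
positive `n` lies in `S(L_GM)` if and only if `n + S_a` lies in the numerical semigroup generated by
`S_a` and `S_a + S_b`, and the Frobenius number of `S(L_GM)` is that of this semigroup, given by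
Sylvester's formula, minus `S_a`.
-/

section

variable {Sa Sb : ℕ}

theorem wordValGM_cons_false (w : List Bool) :
    wordValGM Sa Sb (false :: w) = Sa + wordValGM Sa Sb w := by
  simp only [wordValGM, List.count_cons_self, List.count_cons_of_ne, ne_eq, reduceCtorEq,
    not_false_eq_true]
  ring

theorem wordValGM_cons_true (w : List Bool) :
    wordValGM Sa Sb (true :: w) = Sb + wordValGM Sa Sb w := by
  simp only [wordValGM, List.count_cons_self, List.count_cons_of_ne, ne_eq, reduceCtorEq,
    not_false_eq_true]
  ring

theorem wordValGM_add_mem_closure :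
    ∀ {w : List Bool}, ¬ [true, true] <:+: w →
      wordValGM Sa Sb w + Sa ∈ AddSubmonoid.closure {Sa, Sa + Sb}
  | [], _ => by
    simpa [wordValGM] using AddSubmonoid.mem_closure_of_mem (Set.mem_insert Sa {Sa + Sb})
  | [true], _ => by
    simpa [wordValGM, add_comm] using
      AddSubmonoid.mem_closure_of_mem (Set.mem_insert_of_mem Sa (Set.mem_singleton (Sa + Sb)))
  | false :: w, hw => by
    rw [wordValGM_cons_false, add_assoc]
    exact add_mem (AddSubmonoid.mem_closure_of_mem (by simp))
      (wordValGM_add_mem_closure fun h ↦ hw (List.infix_cons h))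
  | true :: false :: w, hw => by
    rw [wordValGM_cons_true, wordValGM_cons_false, ← add_assoc, add_assoc, add_comm Sb]
    exact add_mem (AddSubmonoid.mem_closure_of_mem (by simp))
      (wordValGM_add_mem_closure fun h ↦ hw (List.infix_cons (List.infix_cons h)))
  | true :: true :: w, hw => absurd (List.prefix_append [true, true] w).isInfix hw

theorem eq_zero_or_exists_wordValGM_add_eq {m : ℕ}
    (hm : m ∈ AddSubmonoid.closure {Sa, Sa + Sb}) :
    m = 0 ∨ ∃ w, ¬ [true, true] <:+: w ∧ wordValGM Sa Sb w + Sa = m := by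
  induction hm using AddSubmonoid.closure_induction_left with
  | zero => exact .inl rfl
  | add_left x hx y _ ih =>
    right
    obtain rfl | rfl := hx <;> obtain rfl | ⟨w, hw, rfl⟩ := ih
    · exact ⟨[], by simp, by simp [wordValGM]⟩
    · exact ⟨false :: w, by simpa [List.infix_cons_iff] using hw,
        by rw [wordValGM_cons_false, add_assoc]⟩
    · exact ⟨[true], by simp [List.infix_cons_iff], by simp [wordValGM, add_comm]⟩
    · exact ⟨true :: false :: w, by simpa [List.infix_cons_iff] using hw,
        by rw [wordValGM_cons_true, wordValGM_cons_false]; ring⟩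

theorem exists_mem_goldenMeanLang_wordValGM_eq_iff {n : ℕ} (hn : 0 < n) :
    (∃ w ∈ goldenMeanLang, wordValGM Sa Sb w = n) ↔
      n + Sa ∈ AddSubmonoid.closure {Sa, Sa + Sb} := by
  constructor
  · rintro ⟨w, ⟨-, hw⟩, rfl⟩
    exact wordValGM_add_mem_closure hw
  · intro h
    obtain h_zero | ⟨w, hw, h_val⟩ := eq_zero_or_exists_wordValGM_add_eq h
    · omega
    · obtain rfl : wordValGM Sa Sb w = n := Nat.add_right_cancel h_val
      refine ⟨w, ⟨?_, hw⟩, rfl⟩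
      rintro rfl
      simp [wordValGM] at hn

theorem goldenMeanLang_gaps_eq :
    {n : ℕ | 0 < n ∧ n ∉ {m : ℕ | ∃ w ∈ goldenMeanLang, wordValGM Sa Sb w = m}} =
      {n : ℕ | n + Sa ∉ AddSubmonoid.closure {Sa, Sa + Sb}} := by
  ext n
  obtain rfl | hn := n.eq_zero_or_pos
  · have h_mem : Sa ∈ AddSubmonoid.closure {Sa, Sa + Sb} :=
      AddSubmonoid.mem_closure_of_mem (Set.mem_insert _ _)
    simp [h_mem]
  · simp only [Set.mem_ofPred_eq, hn, true_and, exists_mem_goldenMeanLang_wordValGM_eq_iff hn]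

theorem frobeniusNumber_pair_self_add {F : ℕ} (hgcd : Nat.gcd Sa Sb = 1)
    (hF : (F : ℤ) = (Sa : ℤ) ^ 2 + (Sa : ℤ) * Sb - 3 * Sa - Sb) :
    FrobeniusNumber (F + Sa) {Sa, Sa + Sb} := by
  have hSa : 1 < Sa := by
    by_contra! h_le_one
    obtain rfl | rfl : Sa = 0 ∨ Sa = 1 := by omega
    · have hSb : Sb = 1 := by simpa using hgcd
      subst hSb
      omega
    · omega
  have h_coprime : Nat.Coprime Sa (Sa + Sb) := Nat.coprime_self_add_right.mpr hgcd
  have h_sylvester : F + Sa = Sa * (Sa + Sb) - Sa - (Sa + Sb) := by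
    have h_sum : F + Sa + Sa + (Sa + Sb) = Sa * (Sa + Sb) := by
      zify
      linear_combination hF
    omega
  rw [h_sylvester]
  exact frobeniusNumber_pair h_coprime hSa (by omega)

end

theorem frobenius_golden_mean_general (Sa Sb : ℕ) (hgcd : Nat.gcd Sa Sb = 1) (F : ℕ)
    (hF : (F : ℤ) = (Sa : ℤ) ^ 2 + (Sa : ℤ) * Sb - 3 * Sa - Sb) :
    {n : ℕ | 0 < n ∧ n ∉ {m : ℕ | ∃ w ∈ goldenMeanLang, wordValGM Sa Sb w = m}}.Finite ∧
    IsGreatest {n : ℕ | 0 < n ∧ n ∉ {m : ℕ | ∃ w ∈ goldenMeanLang, wordValGM Sa Sb w = m}} F := by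
  have h_frob : FrobeniusNumber (F + Sa) {Sa, Sa + Sb} :=
    frobeniusNumber_pair_self_add hgcd hF
  rw [goldenMeanLang_gaps_eq]
  have h_greatest : IsGreatest {n : ℕ | n + Sa ∉ AddSubmonoid.closure {Sa, Sa + Sb}} F :=
    ⟨h_frob.1, fun _ hn ↦ Nat.le_of_add_le_add_right (h_frob.2 hn)⟩
  exact ⟨h_greatest.bddAbove.finite, h_greatest⟩

theorem frobenius_golden_mean (Sa Sb : ℕ) (hSa : 1 < Sa) (hSb : 1 < Sb)
    (hgcd : Nat.gcd Sa Sb = 1) (F : ℕ)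
    (hF : (F : ℤ) = (Sa : ℤ) ^ 2 + (Sa : ℤ) * Sb - 3 * Sa - Sb) :
    {n : ℕ | 0 < n ∧ n ∉ {m : ℕ | ∃ w ∈ goldenMeanLang, wordValGM Sa Sb w = m}}.Finite ∧
    IsGreatest {n : ℕ | 0 < n ∧ n ∉ {m : ℕ | ∃ w ∈ goldenMeanLang, wordValGM Sa Sb w = m}} F :=
  frobenius_golden_mean_general Sa Sb hgcd F hF
end

section
/- Let α ∈ (0,1) be irrational, let L_α be the Sturmian language of α, let S be a homomorphism with values S_0 = S(0), S_1 = S(1), and let q_n = ⌊(n+1)α⌋ for n ≥ 0. Then S(L_α) = {(S_1 − S_0)·q_n + n·S_0 + S_0 : n ≥ 0} ∪ {(S_1 − S_0)·q_n + n·S_0 + S_1 : n ≥ 0}. -/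
/-- `w` is a nonempty finite factor of the infinite word `f`. -/
def IsFactor {A : Type*} (f : ℕ → A) (w : List A) : Prop :=
  w ≠ [] ∧ ∃ i : ℕ, w = (List.range w.length).map fun j => f (i + j)

/-- The lower mechanical word `s_α(n) = ⌊(n+1)α⌋ − ⌊nα⌋`. -/
noncomputable def sturmLow (α : ℝ) (n : ℕ) : ℤ :=
  ⌊((n : ℝ) + 1) * α⌋ - ⌊(n : ℝ) * α⌋

/-- The upper mechanical word `s'_α(n) = ⌈(n+1)α⌉ − ⌈nα⌉`. -/
noncomputable def sturmUp (α : ℝ) (n : ℕ) : ℤ :=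
  ⌈((n : ℝ) + 1) * α⌉ - ⌈(n : ℝ) * α⌉

/-- The Sturmian language of `α`: nonempty factors of `s_α` or of `s'_α`. -/
def sturmLang (α : ℝ) : Set (List ℤ) :=
  {w | IsFactor (sturmLow α) w ∨ IsFactor (sturmUp α) w}

/-- The homomorphism determined by `S0 = S(0)`, `S1 = S(1)`:
`S(w) = N_0(w)·S0 + N_1(w)·S1`. -/
def wordVal01 (S0 S1 : ℕ) (w : List ℤ) : ℕ :=
  w.count 0 * S0 + w.count 1 * S1

/-! The value `S(w)` of a binary word depends only on its length and on its number of ones, which is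
the sum of its letters. Over a factor of length `n + 1` that sum telescopes to
`⌊(i + n + 1)α⌋ - ⌊iα⌋` or `⌈(i + n + 1)α⌉ - ⌈iα⌉`, and since `⌈(n + 1)α⌉ = ⌊(n + 1)α⌋ + 1` it can
only be `⌊(n + 1)α⌋` or `⌊(n + 1)α⌋ + 1`. Both are attained, by the prefixes of `s_α` and of `s'_α`
respectively. -/

section Floor

variable {R : Type*} [Ring R] [LinearOrder R] [IsOrderedRing R] [FloorRing R]

theorem floor_add_sub_floor_eq_or (x y : R) :
    ⌊x + y⌋ - ⌊x⌋ = ⌊y⌋ ∨ ⌊x + y⌋ - ⌊x⌋ = ⌊y⌋ + 1 := by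
  have lower := Int.le_floor_add x y
  have upper := Int.le_floor_add_floor x y
  lia

theorem ceil_add_sub_ceil_eq_or (x y : R) :
    ⌈x + y⌉ - ⌈x⌉ = ⌈y⌉ - 1 ∨ ⌈x + y⌉ - ⌈x⌉ = ⌈y⌉ := by
  have lower := Int.ceil_add_ceil_le x y
  have upper := Int.ceil_add_le x y
  lia

theorem floor_add_sub_floor_eq_zero_or_one (x : R) {y : R} (hy0 : 0 ≤ y) (hy1 : y ≤ 1) :
    ⌊x + y⌋ - ⌊x⌋ = 0 ∨ ⌊x + y⌋ - ⌊x⌋ = 1 := by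
  have lower : ⌊x⌋ ≤ ⌊x + y⌋ := Int.floor_mono (le_add_of_nonneg_right hy0)
  have upper : ⌊x + y⌋ ≤ ⌊x + 1⌋ := Int.floor_mono (by gcongr)
  rw [Int.floor_add_one] at upper
  lia

theorem ceil_add_sub_ceil_eq_zero_or_one (x : R) {y : R} (hy0 : 0 ≤ y) (hy1 : y ≤ 1) :
    ⌈x + y⌉ - ⌈x⌉ = 0 ∨ ⌈x + y⌉ - ⌈x⌉ = 1 := by
  have lower : ⌈x⌉ ≤ ⌈x + y⌉ := Int.ceil_mono (le_add_of_nonneg_right hy0)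
  have upper : ⌈x + y⌉ ≤ ⌈x + 1⌉ := Int.ceil_mono (by gcongr)
  rw [Int.ceil_add_one] at upper
  lia

end Floor

theorem ceil_eq_floor_add_one_of_irrational {x : ℝ} (hx : Irrational x) : ⌈x⌉ = ⌊x⌋ + 1 :=
  (Int.ceil_eq_floor_add_one_iff_notMem x).2 fun ⟨z, hz⟩ => hx.ne_int z hz.symm

theorem isFactor_iff {A : Type*} {f : ℕ → A} {w : List A} :
    IsFactor f w ↔ ∃ i n, w = (List.range (n + 1)).map fun j => f (i + j) := by
  constructor
  · rintro ⟨hne, i, hw⟩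
    obtain ⟨n, hn⟩ := Nat.exists_eq_add_one_of_ne_zero (mt List.length_eq_zero_iff.1 hne)
    exact ⟨i, n, hn ▸ hw⟩
  · rintro ⟨i, n, rfl⟩
    exact ⟨by simp, i, by simp⟩

theorem IsFactor.exists_eq_of_mem {A : Type*} {f : ℕ → A} {w : List A} (hw : IsFactor f w)
    {a : A} (ha : a ∈ w) : ∃ n, f n = a := by
  obtain ⟨i, hw⟩ := hw.2
  rw [hw, List.mem_map] at ha
  obtain ⟨j, -, hj⟩ := ha
  exact ⟨i + j, hj⟩

theorem exists_isFactor_sub_length_sum_iff {G : Type*} [AddCommGroup G] (F : ℕ → G) (n : ℕ)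
    (k : G) :
    (∃ w, IsFactor (fun i => F (i + 1) - F i) w ∧ w.length = n + 1 ∧ w.sum = k) ↔
      ∃ i, F (i + (n + 1)) - F i = k := by
  have telescope (i m : ℕ) :
      ((List.range m).map fun j => F (i + j + 1) - F (i + j)).sum = F (i + m) - F i :=
    List.sum_range_sub m fun j => F (i + j)
  constructor
  · rintro ⟨w, hw, hlen, rfl⟩
    obtain ⟨i, m, rfl⟩ := isFactor_iff.1 hw
    obtain rfl : m = n := by simpa using hlen
    exact ⟨i, (telescope i (m + 1)).symm⟩
  · rintro ⟨i, rfl⟩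
    exact ⟨_, isFactor_iff.2 ⟨i, n, rfl⟩, by simp, telescope i (n + 1)⟩

theorem exists_isFactor_sturmLow_length_sum_iff (α : ℝ) (n : ℕ) (k : ℤ) :
    (∃ w, IsFactor (sturmLow α) w ∧ w.length = n + 1 ∧ w.sum = k) ↔
      ∃ i : ℕ, ⌊i * α + (n + 1) * α⌋ - ⌊i * α⌋ = k := by
  have differences :
      sturmLow α = fun i : ℕ => ⌊((i + 1 : ℕ) : ℝ) * α⌋ - ⌊(i : ℝ) * α⌋ := by
    funext i
    simp only [sturmLow, Nat.cast_succ]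
  rw [differences, exists_isFactor_sub_length_sum_iff fun i : ℕ => ⌊(i : ℝ) * α⌋]
  simp only [Nat.cast_add, Nat.cast_one, add_mul]

theorem exists_isFactor_sturmUp_length_sum_iff (α : ℝ) (n : ℕ) (k : ℤ) :
    (∃ w, IsFactor (sturmUp α) w ∧ w.length = n + 1 ∧ w.sum = k) ↔
      ∃ i : ℕ, ⌈i * α + (n + 1) * α⌉ - ⌈i * α⌉ = k := by
  have differences :
      sturmUp α = fun i : ℕ => ⌈((i + 1 : ℕ) : ℝ) * α⌉ - ⌈(i : ℝ) * α⌉ := by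
    funext i
    simp only [sturmUp, Nat.cast_succ]
  rw [differences, exists_isFactor_sub_length_sum_iff fun i : ℕ => ⌈(i : ℝ) * α⌉]
  simp only [Nat.cast_add, Nat.cast_one, add_mul]

theorem exists_mem_sturmLang_length_sum_iff {α : ℝ} (hα : Irrational α) (n : ℕ) (k : ℤ) :
    (∃ w ∈ sturmLang α, w.length = n + 1 ∧ w.sum = k) ↔
      k = ⌊((n : ℝ) + 1) * α⌋ ∨ k = ⌊((n : ℝ) + 1) * α⌋ + 1 := by
  have hceil : ⌈((n : ℝ) + 1) * α⌉ = ⌊((n : ℝ) + 1) * α⌋ + 1 :=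
    ceil_eq_floor_add_one_of_irrational (by exact_mod_cast hα.natCast_mul n.succ_ne_zero)
  simp only [sturmLang, Set.mem_ofPred_eq, or_and_right, exists_or,
    exists_isFactor_sturmLow_length_sum_iff, exists_isFactor_sturmUp_length_sum_iff]
  constructor
  · rintro (⟨i, rfl⟩ | ⟨i, rfl⟩)
    · exact floor_add_sub_floor_eq_or _ _
    · simpa [hceil] using ceil_add_sub_ceil_eq_or ((i : ℝ) * α) ((n + 1) * α)
  · rintro (rfl | rfl)
    · exact .inl ⟨0, by simp⟩
    · exact .inr ⟨0, by simp [hceil]⟩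

theorem eq_zero_or_one_of_mem_sturmLang {α : ℝ} (hα0 : 0 ≤ α) (hα1 : α ≤ 1) {w : List ℤ}
    (hw : w ∈ sturmLang α) {a : ℤ} (ha : a ∈ w) : a = 0 ∨ a = 1 := by
  rcases hw with hw | hw <;> obtain ⟨n, rfl⟩ := hw.exists_eq_of_mem ha
  · simpa [sturmLow, add_one_mul] using
      floor_add_sub_floor_eq_zero_or_one ((n : ℝ) * α) hα0 hα1
  · simpa [sturmUp, add_one_mul] using
      ceil_add_sub_ceil_eq_zero_or_one ((n : ℝ) * α) hα0 hα1

theorem wordVal01_eq_sum_length (S0 S1 : ℕ) {w : List ℤ} (hw : ∀ a ∈ w, a = 0 ∨ a = 1) :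
    (wordVal01 S0 S1 w : ℤ) = ((S1 : ℤ) - S0) * w.sum + w.length * S0 := by
  induction w with
  | nil => simp [wordVal01]
  | cons a w ih =>
    obtain ⟨ha, hw⟩ := List.forall_mem_cons.1 hw
    have ih := ih hw
    simp only [wordVal01, List.sum_cons, List.length_cons] at ih ⊢
    rcases ha with rfl | rfl
    · rw [List.count_cons_self, List.count_cons_of_ne zero_ne_one]
      push_cast at ih ⊢
      linear_combination ih
    · rw [List.count_cons_self, List.count_cons_of_ne one_ne_zero]
      push_cast at ih ⊢
      linear_combination ih

theorem exists_mem_sturmLang_wordVal01_iff {α : ℝ} (hα0 : 0 ≤ α) (hα1 : α ≤ 1) (S0 S1 m : ℕ) :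
    (∃ w ∈ sturmLang α, wordVal01 S0 S1 w = m) ↔
      ∃ (n : ℕ) (k : ℤ), (∃ w ∈ sturmLang α, w.length = n + 1 ∧ w.sum = k) ∧
        (m : ℤ) = ((S1 : ℤ) - S0) * k + ((n : ℤ) + 1) * S0 := by
  have value {w : List ℤ} (hw : w ∈ sturmLang α) :
      (wordVal01 S0 S1 w : ℤ) = ((S1 : ℤ) - S0) * w.sum + w.length * S0 :=
    wordVal01_eq_sum_length S0 S1 fun _ => eq_zero_or_one_of_mem_sturmLang hα0 hα1 hw
  constructor
  · rintro ⟨w, hw, rfl⟩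
    have hne : w ≠ [] := hw.elim And.left And.left
    obtain ⟨n, hlen⟩ := Nat.exists_eq_add_one_of_ne_zero (mt List.length_eq_zero_iff.1 hne)
    exact ⟨n, w.sum, ⟨w, hw, hlen, rfl⟩, by rw [value hw, hlen, Nat.cast_succ]⟩
  · rintro ⟨n, _, ⟨w, hw, hlen, rfl⟩, hm⟩
    refine ⟨w, hw, ?_⟩
    rw [← Int.natCast_inj, value hw, hlen, hm, Nat.cast_succ]

theorem sturmian_image (α : ℝ) (hα0 : 0 < α) (hα1 : α < 1) (hirr : Irrational α)
    (S0 S1 : ℕ) (hS0 : 0 < S0) (hS1 : 0 < S1) :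
    {m : ℕ | ∃ w ∈ sturmLang α, wordVal01 S0 S1 w = m} =
      {m : ℕ | ∃ n : ℕ,
        (m : ℤ) = ((S1 : ℤ) - S0) * ⌊((n : ℝ) + 1) * α⌋ + n * S0 + S0 ∨
        (m : ℤ) = ((S1 : ℤ) - S0) * ⌊((n : ℝ) + 1) * α⌋ + n * S0 + S1} := by
  ext m
  simp only [Set.mem_ofPred_eq, exists_mem_sturmLang_wordVal01_iff hα0.le hα1.le,
    exists_mem_sturmLang_length_sum_iff hirr, or_and_right, exists_or, exists_eq_left]
  exact or_congr (exists_congr fun n => Eq.congr_right (by ring))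
    (exists_congr fun n => Eq.congr_right (by ring))
end

section
/- Let S be the homomorphism of the Fibonacci language L_F with S(0) = 1 and S(1) = 3. Then S(L_F) = ℕ, the set of all positive integers. -/
/-- The golden mean `Φ = (1+√5)/2`. -/
noncomputable def Phi : ℝ := (1 + Real.sqrt 5) / 2

/-- The Fibonacci word `c(n) = ⌊(n+2)α⌋ − ⌊(n+1)α⌋` with `α = 2 − Φ`. -/
noncomputable def fibWord (n : ℕ) : ℤ :=
  ⌊((n : ℝ) + 2) * (2 - Phi)⌋ - ⌊((n : ℝ) + 1) * (2 - Phi)⌋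

/-- The infinite word `0c`: the Fibonacci word prefixed by `0`. -/
noncomputable def fibWord0 (n : ℕ) : ℤ :=
  if n = 0 then 0 else fibWord (n - 1)

/-- The infinite word `1c`: the Fibonacci word prefixed by `1`. -/
noncomputable def fibWord1 (n : ℕ) : ℤ :=
  if n = 0 then 1 else fibWord (n - 1)

/-- The Fibonacci language: nonempty finite factors of `0c` or of `1c`. -/
def fibLang : Set (List ℤ) :=
  {w | IsFactor fibWord0 w ∨ IsFactor fibWord1 w}

/-!
Let `v n` be the value of the prefix of length `n` of the Fibonacci word `c`. Prefixing it by `0` or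
by `1` shows that the language takes the values `v n + 1` and `v n + 3`. Since the slope `2 - Φ` is
below `1/2`, the letter `1` is isolated in `c`, so the sequence `v` climbs by steps of `1` and `3`
with no two consecutive steps of `3`. Of the two integers skipped by a step of `3` from `v n`, the
larger is `v n + 2` and the smaller is `v (n - 1) + 2`; here `n ≥ 1`, as `c` begins with `0`. Hence
every natural number is `v n` or `v n + 2` for some `n`.
-/

/-- The infinite word `af`: the word `f` prefixed by the letter `a`. It is written so that, by
definition, `fibWord0` and `fibWord1` are its instances with `f = fibWord`. -/
def wordCons {A : Type*} (a : A) (f : ℕ → A) (n : ℕ) : A :=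
  if n = 0 then a else f (n - 1)

/-- The prefix of length `n` of the infinite word `f`, empty for `n = 0`. -/
def wordPrefix {A : Type*} (f : ℕ → A) (n : ℕ) : List A :=
  (List.range n).map f

section Words

variable {A : Type*}

lemma wordPrefix_succ (f : ℕ → A) (n : ℕ) : wordPrefix f (n + 1) = wordPrefix f n ++ [f n] := by
  simp [wordPrefix, List.range_succ]

lemma wordPrefix_wordCons_succ (a : A) (f : ℕ → A) (n : ℕ) :
    wordPrefix (wordCons a f) (n + 1) = a :: wordPrefix f n := by
  simp [wordPrefix, wordCons, List.range_succ_eq_map]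

lemma isFactor_wordPrefix_succ (f : ℕ → A) (n : ℕ) : IsFactor f (wordPrefix f (n + 1)) :=
  ⟨by simp [wordPrefix], 0, by simp [wordPrefix]⟩

lemma isFactor_wordCons (a : A) (f : ℕ → A) (n : ℕ) :
    IsFactor (wordCons a f) (a :: wordPrefix f n) :=
  wordPrefix_wordCons_succ a f n ▸ isFactor_wordPrefix_succ (wordCons a f) n

lemma IsFactor.exists_apply_mem {f : ℕ → A} {w : List A} (hw : IsFactor f w) :
    ∃ n, f n ∈ w := by
  obtain ⟨hne, i, hi⟩ := hw
  refine ⟨i, ?_⟩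
  rw [hi, List.mem_map]
  exact ⟨0, List.mem_range.mpr (List.length_pos_iff.mpr hne), rfl⟩

lemma forall_wordCons {P : A → Prop} {a : A} {f : ℕ → A} (ha : P a) (hf : ∀ n, P (f n)) (n : ℕ) :
    P (wordCons a f n) := by
  cases n with
  | zero => exact ha
  | succ n => exact hf n

end Words

section Values

variable (S₀ S₁ : ℕ)

lemma wordVal01_zero_cons (w : List ℤ) : wordVal01 S₀ S₁ (0 :: w) = wordVal01 S₀ S₁ w + S₀ := by
  simp [wordVal01, add_mul, add_right_comm]

lemma wordVal01_one_cons (w : List ℤ) : wordVal01 S₀ S₁ (1 :: w) = wordVal01 S₀ S₁ w + S₁ := by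
  simp [wordVal01, add_mul, add_assoc]

variable {S₀ S₁}

lemma wordVal01_pos_of_mem {w : List ℤ} (h₀ : 0 < S₀) (h₁ : 0 < S₁) (hw : 0 ∈ w ∨ 1 ∈ w) :
    0 < wordVal01 S₀ S₁ w := by
  rcases hw with hw | hw
  · exact Nat.add_pos_left (Nat.mul_pos (List.count_pos_iff.mpr hw) h₀) _
  · exact Nat.add_pos_right _ (Nat.mul_pos (List.count_pos_iff.mpr hw) h₁)

lemma IsFactor.wordVal01_pos {f : ℕ → ℤ} {w : List ℤ} (hw : IsFactor f w)
    (hf : ∀ n, f n = 0 ∨ f n = 1) (h₀ : 0 < S₀) (h₁ : 0 < S₁) : 0 < wordVal01 S₀ S₁ w := by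
  obtain ⟨n, hn⟩ := hw.exists_apply_mem
  refine wordVal01_pos_of_mem h₀ h₁ ?_
  rcases hf n with h | h
  · exact .inl (h ▸ hn)
  · exact .inr (h ▸ hn)

lemma wordVal01_wordPrefix_succ_of_eq_zero {f : ℕ → ℤ} {n : ℕ} (hn : f n = 0) :
    wordVal01 S₀ S₁ (wordPrefix f (n + 1)) = wordVal01 S₀ S₁ (wordPrefix f n) + S₀ := by
  simp [wordPrefix_succ, hn, wordVal01, add_mul, add_right_comm]

lemma wordVal01_wordPrefix_succ_of_eq_one {f : ℕ → ℤ} {n : ℕ} (hn : f n = 1) :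
    wordVal01 S₀ S₁ (wordPrefix f (n + 1)) = wordVal01 S₀ S₁ (wordPrefix f n) + S₁ := by
  simp [wordPrefix_succ, hn, wordVal01, add_mul, add_assoc]

end Values

lemma exists_eq_or_eq_add_two_of_isolated_steps {v : ℕ → ℕ} (hfirst : v 1 = v 0 + 1)
    (hstep : ∀ n, v (n + 1) = v n + 1 ∨ v (n + 1) = v n + 3)
    (hisolated : ∀ n, v (n + 1) = v n + 1 ∨ v (n + 2) = v (n + 1) + 1)
    {m : ℕ} (hm : v 0 ≤ m) : ∃ n, m = v n ∨ m = v n + 2 := by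
  induction m, hm using Nat.le_induction with
  | base => exact ⟨0, .inl rfl⟩
  | succ m _ ih =>
    obtain ⟨n, rfl | rfl⟩ := ih
    · rcases hstep n with hone | hthree
      · exact ⟨n + 1, .inl hone.symm⟩
      · cases n with
        | zero => exact absurd (hfirst.symm.trans hthree) (by omega)
        | succ k =>
          have hprev : v (k + 1) = v k + 1 :=
            (hisolated k).resolve_right fun hone => absurd (hone.symm.trans hthree) (by omega)
          exact ⟨k, .inr (by omega)⟩
    · rcases hstep n with hone | hthree
      · exact ⟨n + 1, .inr (by omega)⟩
      · exact ⟨n + 1, .inl hthree.symm⟩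

lemma exists_wordVal01_wordPrefix_eq_or_add_two {c : ℕ → ℤ} (hbinary : ∀ n, c n = 0 ∨ c n = 1)
    (hzero : c 0 = 0) (hisolated : ∀ n, c n = 0 ∨ c (n + 1) = 0) (m : ℕ) :
    ∃ n, m = wordVal01 1 3 (wordPrefix c n) ∨ m = wordVal01 1 3 (wordPrefix c n) + 2 :=
  exists_eq_or_eq_add_two_of_isolated_steps (v := fun n => wordVal01 1 3 (wordPrefix c n))
    (wordVal01_wordPrefix_succ_of_eq_zero hzero)
    (fun n => (hbinary n).imp wordVal01_wordPrefix_succ_of_eq_zero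
      wordVal01_wordPrefix_succ_of_eq_one)
    (fun n => (hisolated n).imp wordVal01_wordPrefix_succ_of_eq_zero
      wordVal01_wordPrefix_succ_of_eq_zero)
    (Nat.zero_le m)

theorem fib_image_is_N_one_three_general {c : ℕ → ℤ} (hbinary : ∀ n, c n = 0 ∨ c n = 1)
    (hzero : c 0 = 0) (hisolated : ∀ n, c n = 0 ∨ c (n + 1) = 0) :
    {m : ℕ | ∃ w, (IsFactor (wordCons 0 c) w ∨ IsFactor (wordCons 1 c) w) ∧ wordVal01 1 3 w = m} =
      {n : ℕ | 0 < n} := by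
  ext m
  simp only [Set.mem_ofPred_eq]
  constructor
  · rintro ⟨w, hw | hw, rfl⟩
    · exact hw.wordVal01_pos (forall_wordCons (P := fun a => a = 0 ∨ a = 1) (.inl rfl) hbinary)
        one_pos three_pos
    · exact hw.wordVal01_pos (forall_wordCons (P := fun a => a = 0 ∨ a = 1) (.inr rfl) hbinary)
        one_pos three_pos
  · intro hm
    obtain ⟨k, rfl⟩ := Nat.exists_eq_add_one.mpr hm
    obtain ⟨n, rfl | rfl⟩ := exists_wordVal01_wordPrefix_eq_or_add_two hbinary hzero hisolated k
    · exact ⟨0 :: wordPrefix c n, .inl (isFactor_wordCons 0 c n), wordVal01_zero_cons 1 3 _⟩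
    · exact ⟨1 :: wordPrefix c n, .inr (isFactor_wordCons 1 c n), wordVal01_one_cons 1 3 _⟩

lemma floor_add_sub_floor_eq_zero_or_one_s7 {R : Type*} [Ring R] [LinearOrder R]
    [IsStrictOrderedRing R] [FloorRing R] {a : R} (ha₀ : 0 ≤ a) (ha₁ : a ≤ 1) (x : R) :
    ⌊x + a⌋ - ⌊x⌋ = 0 ∨ ⌊x + a⌋ - ⌊x⌋ = 1 := by
  have hlower : ⌊x⌋ ≤ ⌊x + a⌋ := Int.floor_le_floor (le_add_of_nonneg_right ha₀)
  have hupper : ⌊x + a⌋ ≤ ⌊x⌋ + 1 := by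
    rw [← Int.floor_add_one]
    gcongr
  omega

lemma Phi_lt_two : Phi < 2 :=
  Real.goldenRatio_lt_two

lemma three_halves_lt_Phi : 3 / 2 < Phi := by
  have hsqrt : 2 < √5 := Real.lt_sqrt_of_sq_lt (by norm_num)
  unfold Phi
  linarith

lemma fibWord_eq_zero_or_one (n : ℕ) : fibWord n = 0 ∨ fibWord n = 1 := by
  have hfloor := floor_add_sub_floor_eq_zero_or_one_s7 (a := 2 - Phi) (by linarith [Phi_lt_two])
    (by linarith [three_halves_lt_Phi]) (((n : ℝ) + 1) * (2 - Phi))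
  have hnext : ((n : ℝ) + 1) * (2 - Phi) + (2 - Phi) = ((n : ℝ) + 2) * (2 - Phi) := by ring
  rwa [hnext] at hfloor

lemma fibWord_zero : fibWord 0 = 0 := by
  have hlower := Phi_lt_two
  have hupper := three_halves_lt_Phi
  have htwo : ⌊((0 : ℕ) + 2 : ℝ) * (2 - Phi)⌋ = 0 :=
    Int.floor_eq_zero_iff.mpr ⟨by push_cast; linarith, by push_cast; linarith⟩
  have hone : ⌊((0 : ℕ) + 1 : ℝ) * (2 - Phi)⌋ = 0 :=
    Int.floor_eq_zero_iff.mpr ⟨by push_cast; linarith, by push_cast; linarith⟩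
  rw [fibWord, htwo, hone, sub_zero]

lemma fibWord_add_fibWord_succ (n : ℕ) :
    fibWord n + fibWord (n + 1) =
      ⌊((n : ℝ) + 1) * (2 - Phi) + 2 * (2 - Phi)⌋ - ⌊((n : ℝ) + 1) * (2 - Phi)⌋ := by
  have hmiddle : ((n + 1 : ℕ) : ℝ) + 1 = n + 2 := by push_cast; ring
  have hlast : (((n + 1 : ℕ) : ℝ) + 2) * (2 - Phi) = (n + 1) * (2 - Phi) + 2 * (2 - Phi) := by
    push_cast
    ring
  rw [fibWord, fibWord, hmiddle, hlast]
  ring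

lemma fibWord_eq_zero_or_succ_eq_zero (n : ℕ) : fibWord n = 0 ∨ fibWord (n + 1) = 0 := by
  have hsum := floor_add_sub_floor_eq_zero_or_one_s7 (a := 2 * (2 - Phi)) (by linarith [Phi_lt_two])
    (by linarith [three_halves_lt_Phi]) (((n : ℝ) + 1) * (2 - Phi))
  rw [← fibWord_add_fibWord_succ] at hsum
  have hn := fibWord_eq_zero_or_one n
  have hsucc := fibWord_eq_zero_or_one (n + 1)
  omega

theorem fib_image_is_N_one_three :
    {m : ℕ | ∃ w ∈ fibLang, wordVal01 1 3 w = m} = {n : ℕ | 0 < n} :=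
  fib_image_is_N_one_three_general fibWord_eq_zero_or_one fibWord_zero
    fibWord_eq_zero_or_succ_eq_zero
end

section
/- Let Φ = (1+√5)/2. The three sets {⌊nΦ⌋ + n : n ≥ 1}, {⌊nΦ⌋ + n + 1 : n ≥ 1} and {2⌊nΦ⌋ + n + 1 : n ≥ 0} form a complementary triple: they are pairwise disjoint and their union is the set of all positive integers. -/
/-!
Let `a` and `b` be the Beatty sequences of `r` and `s`, with `r` irrational and `1/r + 1/s = 1`.
By Rayleigh's theorem `a` on `n ≥ 1` and `b` on `n ≥ 0` together enumerate the nonnegative integers,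
each once. The injection `k ↦ a (k + 1)` carries this partition to a splitting of the positive
values of `a` into `a (a n + 1)`, `n ≥ 1`, and `a (b n + 1)`, `n ≥ 0`; with the values `b n`,
`n ≥ 1`, these partition the positive integers. For `r = Φ` and `s = Φ²`, the relation
`Φ² = Φ + 1` turns these three sequences into `a n + n + 1`, `2 a n + n + 1` and `a n + n`.
-/

open Set
open scoped goldenRatio

theorem image_Ioi_zero_eq_setOf_natCast {α : Type*} (f : ℤ → α) :
    f '' Ioi 0 = {x | ∃ n : ℕ, 1 ≤ n ∧ x = f n} := by
  ext x
  constructor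
  · rintro ⟨k, hk : 0 < k, rfl⟩
    lift k to ℕ using hk.le
    exact ⟨k, by exact_mod_cast hk, rfl⟩
  · rintro ⟨n, hn, rfl⟩
    exact mem_image_of_mem f (Int.natCast_pos.2 hn)

theorem image_Ici_zero_eq_setOf_natCast {α : Type*} (f : ℤ → α) :
    f '' Ici 0 = {x | ∃ n : ℕ, x = f n} := by
  ext x
  constructor
  · rintro ⟨k, hk : 0 ≤ k, rfl⟩
    lift k to ℕ using hk
    exact ⟨k, rfl⟩
  · rintro ⟨n, rfl⟩
    exact mem_image_of_mem f (Int.natCast_nonneg n)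

theorem beattySeq_zero (r : ℝ) : beattySeq r 0 = 0 := by
  simp [beattySeq]

theorem strictMono_beattySeq {r : ℝ} (hr : 1 ≤ r) : StrictMono (beattySeq r) := by
  intro i j hij
  have hij' : (i : ℝ) + 1 ≤ j := by exact_mod_cast hij
  rw [← Int.add_one_le_iff, beattySeq, beattySeq, Int.le_floor]
  calc ((⌊i * r⌋ + 1 : ℤ) : ℝ) = ⌊i * r⌋ + 1 := by push_cast; rfl
    _ ≤ i * r + r := add_le_add (Int.floor_le _) hr
    _ = (i + 1) * r := by ring
    _ ≤ j * r := by gcongr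

theorem beattySeq_add_one (r : ℝ) (n : ℤ) : beattySeq (r + 1) n = beattySeq r n + n := by
  rw [beattySeq, mul_add_one, Int.floor_add_intCast, beattySeq]

section Rayleigh

variable {r s : ℝ}

theorem disjoint_image_beattySeq_Ioi_range_beattySeq (hrs : r.HolderConjugate s)
    (hr : Irrational r) : Disjoint (beattySeq r '' Ioi 0) (range (beattySeq s)) := by
  have hsub : beattySeq r '' Ioi 0 ⊆ {beattySeq' r k | k} :=
    hr.beattySeq'_pos_eq.symm.subset.trans fun _ ⟨k, _, hk⟩ ↦ ⟨k, hk⟩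
  exact (subset_compl_iff_disjoint_right.1 (compl_beattySeq hrs.symm).symm.subset).mono_left hsub

theorem disjoint_image_beattySeq_Ioi (hrs : r.HolderConjugate s) (hr : Irrational r) :
    Disjoint (beattySeq r '' Ioi 0) (beattySeq s '' Ioi 0) :=
  (disjoint_image_beattySeq_Ioi_range_beattySeq hrs hr).mono_right (image_subset_range _ _)

theorem image_beattySeq_Ioi_union_image_beattySeq_Ioi (hrs : r.HolderConjugate s)
    (hr : Irrational r) : beattySeq r '' Ioi 0 ∪ beattySeq s '' Ioi 0 = Ioi 0 :=
  (disjoint_image_beattySeq_Ioi hrs hr).symmDiff_eq_sup.symm.trans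
    (hr.beattySeq_symmDiff_beattySeq_pos hrs)

theorem image_beattySeq_Ioi_union_image_beattySeq_Ici (hrs : r.HolderConjugate s)
    (hr : Irrational r) : beattySeq r '' Ioi 0 ∪ beattySeq s '' Ici 0 = Ici 0 := by
  rw [← Ioi_insert, image_insert_eq, beattySeq_zero, union_insert,
    image_beattySeq_Ioi_union_image_beattySeq_Ioi hrs hr]

theorem image_beattySeq_add_one_Ici (r : ℝ) :
    (fun k ↦ beattySeq r (k + 1)) '' Ici 0 = beattySeq r '' Ioi 0 := by
  rw [← image_image (beattySeq r) (· + 1), image_add_const_Ici, zero_add]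
  rfl

theorem image_beattySeq_Ioi_eq_union (hrs : r.HolderConjugate s) (hr : Irrational r) :
    (fun n ↦ beattySeq r (beattySeq r n + 1)) '' Ioi 0 ∪
      (fun n ↦ beattySeq r (beattySeq s n + 1)) '' Ici 0 = beattySeq r '' Ioi 0 := by
  rw [← image_image (fun k ↦ beattySeq r (k + 1)) (beattySeq r),
    ← image_image (fun k ↦ beattySeq r (k + 1)) (beattySeq s), ← image_union,
    image_beattySeq_Ioi_union_image_beattySeq_Ici hrs hr, image_beattySeq_add_one_Ici]

theorem disjoint_image_beattySeq_beattySeq_add_one (hrs : r.HolderConjugate s)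
    (hr : Irrational r) :
    Disjoint ((fun n ↦ beattySeq r (beattySeq r n + 1)) '' Ioi 0)
      ((fun n ↦ beattySeq r (beattySeq s n + 1)) '' Ici 0) := by
  have hinj : Function.Injective fun k ↦ beattySeq r (k + 1) :=
    (strictMono_beattySeq hrs.lt.le).injective.comp (add_left_injective 1)
  have hdisj : Disjoint (beattySeq r '' Ioi 0) (beattySeq s '' Ici 0) :=
    (disjoint_image_beattySeq_Ioi_range_beattySeq hrs hr).mono_right (image_subset_range _ _)
  simpa only [image_image] using (disjoint_image_iff hinj).2 hdisj

end Rayleigh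

theorem holderConjugate_goldenRatio_sq : Real.HolderConjugate φ (φ ^ 2) := by
  rw [Real.holderConjugate_iff]
  refine ⟨Real.one_lt_goldenRatio, ?_⟩
  have hφ : φ ≠ 0 := Real.goldenRatio_ne_zero
  rw [inv_add_inv hφ (pow_ne_zero 2 hφ), div_eq_one_iff_eq (mul_ne_zero hφ (pow_ne_zero 2 hφ))]
  linear_combination -φ * Real.goldenRatio_sq

theorem beattySeq_goldenRatio_sq (n : ℤ) : beattySeq (φ ^ 2) n = beattySeq φ n + n := by
  rw [Real.goldenRatio_sq, beattySeq_add_one]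

theorem beattySeq_beattySeq_goldenRatio_add_one (n : ℤ) :
    beattySeq φ (beattySeq φ n + 1) = beattySeq φ n + n + 1 := by
  simp only [beattySeq]
  have hval : ((⌊n * φ⌋ + 1 : ℤ) : ℝ) * φ =
      ((⌊n * φ⌋ + n + 1 : ℤ) : ℝ) + (1 - Int.fract (n * φ)) * (φ - 1) := by
    push_cast
    rw [Int.fract]
    linear_combination n * Real.goldenRatio_sq
  have hrem : (1 - Int.fract (n * φ)) * (φ - 1) ∈ Ico 0 1 := by
    have hfract_nonneg := Int.fract_nonneg (n * φ)
    have hfract_lt := Int.fract_lt_one (n * φ)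
    have hφ_gt := Real.one_lt_goldenRatio
    have hφ_lt := Real.goldenRatio_lt_two
    constructor <;> nlinarith
  rw [hval, Int.floor_intCast_add, Int.floor_eq_zero_iff.2 hrem, add_zero]

theorem beattySeq_beattySeq_goldenRatio_sq_add_one (n : ℤ) :
    beattySeq φ (beattySeq (φ ^ 2) n + 1) = 2 * beattySeq φ n + n + 1 := by
  rw [beattySeq_goldenRatio_sq]
  simp only [beattySeq]
  have hval : ((⌊n * φ⌋ + n + 1 : ℤ) : ℝ) * φ =
      ((2 * ⌊n * φ⌋ + n + 1 : ℤ) : ℝ) + (φ - 1 + Int.fract (n * φ) * (2 - φ)) := by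
    push_cast
    rw [Int.fract]
    linear_combination n * Real.goldenRatio_sq
  have hrem : φ - 1 + Int.fract (n * φ) * (2 - φ) ∈ Ico 0 1 := by
    have hfract_nonneg := Int.fract_nonneg (n * φ)
    have hfract_lt := Int.fract_lt_one (n * φ)
    have hφ_gt := Real.one_lt_goldenRatio
    have hφ_lt := Real.goldenRatio_lt_two
    constructor <;> nlinarith
  rw [hval, Int.floor_intCast_add, Int.floor_eq_zero_iff.2 hrem, add_zero]

theorem Phi_eq_goldenRatio : Phi = φ := rfl

theorem image_beattySeq_goldenRatio_sq :
    beattySeq (φ ^ 2) '' Ioi 0 = {m : ℤ | ∃ n : ℕ, 1 ≤ n ∧ m = ⌊(n : ℝ) * Phi⌋ + n} := by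
  simp only [image_Ioi_zero_eq_setOf_natCast, beattySeq_goldenRatio_sq]
  simp only [beattySeq, Int.cast_natCast, Phi_eq_goldenRatio]

theorem image_beattySeq_beattySeq_goldenRatio_add_one :
    (fun n ↦ beattySeq φ (beattySeq φ n + 1)) '' Ioi 0 =
      {m : ℤ | ∃ n : ℕ, 1 ≤ n ∧ m = ⌊(n : ℝ) * Phi⌋ + n + 1} := by
  simp only [image_Ioi_zero_eq_setOf_natCast, beattySeq_beattySeq_goldenRatio_add_one]
  simp only [beattySeq, Int.cast_natCast, Phi_eq_goldenRatio]

theorem image_beattySeq_beattySeq_goldenRatio_sq_add_one :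
    (fun n ↦ beattySeq φ (beattySeq (φ ^ 2) n + 1)) '' Ici 0 =
      {m : ℤ | ∃ n : ℕ, m = 2 * ⌊(n : ℝ) * Phi⌋ + n + 1} := by
  simp only [image_Ici_zero_eq_setOf_natCast, beattySeq_beattySeq_goldenRatio_sq_add_one]
  simp only [beattySeq, Int.cast_natCast, Phi_eq_goldenRatio]

theorem complementary_triple_one :
    (Disjoint {m : ℤ | ∃ n : ℕ, 1 ≤ n ∧ m = ⌊(n : ℝ) * Phi⌋ + n}
              {m : ℤ | ∃ n : ℕ, 1 ≤ n ∧ m = ⌊(n : ℝ) * Phi⌋ + n + 1} ∧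
     Disjoint {m : ℤ | ∃ n : ℕ, 1 ≤ n ∧ m = ⌊(n : ℝ) * Phi⌋ + n}
              {m : ℤ | ∃ n : ℕ, m = 2 * ⌊(n : ℝ) * Phi⌋ + n + 1} ∧
     Disjoint {m : ℤ | ∃ n : ℕ, 1 ≤ n ∧ m = ⌊(n : ℝ) * Phi⌋ + n + 1}
              {m : ℤ | ∃ n : ℕ, m = 2 * ⌊(n : ℝ) * Phi⌋ + n + 1}) ∧
    {m : ℤ | ∃ n : ℕ, 1 ≤ n ∧ m = ⌊(n : ℝ) * Phi⌋ + n} ∪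
      {m : ℤ | ∃ n : ℕ, 1 ≤ n ∧ m = ⌊(n : ℝ) * Phi⌋ + n + 1} ∪
      {m : ℤ | ∃ n : ℕ, m = 2 * ⌊(n : ℝ) * Phi⌋ + n + 1} =
      {m : ℤ | 0 < m} := by
  have hφ := holderConjugate_goldenRatio_sq
  have hirr := Real.goldenRatio_irrational
  have hsplit := image_beattySeq_Ioi_eq_union hφ hirr
  have hdisj := (disjoint_image_beattySeq_Ioi hφ hirr).symm
  rw [← hsplit, disjoint_union_right] at hdisj
  rw [← image_beattySeq_goldenRatio_sq, ← image_beattySeq_beattySeq_goldenRatio_add_one,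
    ← image_beattySeq_beattySeq_goldenRatio_sq_add_one]
  refine ⟨⟨hdisj.1, hdisj.2, disjoint_image_beattySeq_beattySeq_add_one hφ hirr⟩, ?_⟩
  rw [union_assoc, hsplit, union_comm]
  exact image_beattySeq_Ioi_union_image_beattySeq_Ioi hφ hirr
end

section
/- Let S be a homomorphism of the Thue–Morse language L_TM with values p = S(a), q = S(b), and set r = p + q. Then for every n ≥ 1, the set of values of S on words of length 2n in L_TM equals {rn, rn + q − p, rn + p − q} (as a set of integers), and the set of values of S on words of length 2n − 1 in L_TM equals {r(n−1) + p, r(n−1) + q}. -/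
/-- The Thue–Morse morphism `a ↦ ab`, `b ↦ ba` (here `a = false`, `b = true`),
extended to words by concatenation. -/
def tmMorph (w : List Bool) : List Bool :=
  w.flatMap fun x => if x then [true, false] else [false, true]

/-- The Thue–Morse word: the fixed point beginning with `a` of the Thue–Morse
morphism (the `n`-th letter is read off from a sufficiently high iterate on `a`). -/
def tmWord (n : ℕ) : Bool :=
  (tmMorph^[n + 1] [false]).getD n false

/-- The Thue–Morse language: nonempty finite factors of the Thue–Morse word. -/
def tmLang : Set (List Bool) :=
  {w | IsFactor tmWord w}

/-- The homomorphism determined by `p = S(a)`, `q = S(b)`: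
`S(w) = N_a(w)·p + N_b(w)·q`. -/
def wordValTM (p q : ℕ) (w : List Bool) : ℕ :=
  w.count false * p + w.count true * q

/-!
Cut a factor of the Thue–Morse word at the even positions. Each complete block is `ab` or `ba`, of
value `r = S(a) + S(b)`, so the value of the factor is a multiple of `r` plus the values of at most
two letters left over at its ends. Two letters are left over exactly when a factor of even length
starts at an odd position, and every pair of letters arises in this way because every pair of
letters occurs in the word at every positive distance.
-/

theorem tmMorph_cons (x : Bool) (w : List Bool) : tmMorph (x :: w) = x :: (!x) :: tmMorph w := by
  cases x <;> rfl

theorem length_tmMorph (w : List Bool) : (tmMorph w).length = 2 * w.length := by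
  induction w with
  | nil => rfl
  | cons x w ih => simp only [tmMorph_cons, List.length_cons, ih]; ring

theorem length_iterate_tmMorph (m : ℕ) (w : List Bool) :
    (tmMorph^[m] w).length = 2 ^ m * w.length := by
  induction m with
  | zero => simp
  | succ m ih => rw [Function.iterate_succ_apply', length_tmMorph, ih, pow_succ']; ring

theorem getElem?_tmMorph_two_mul (w : List Bool) (i : ℕ) : (tmMorph w)[2 * i]? = w[i]? := by
  induction w generalizing i with
  | nil => rfl
  | cons x w ih => cases i <;> simp [tmMorph_cons, Nat.mul_succ, ih]

theorem getElem?_tmMorph_two_mul_add_one (w : List Bool) (i : ℕ) :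
    (tmMorph w)[2 * i + 1]? = w[i]?.map not := by
  induction w generalizing i with
  | nil => rfl
  | cons x w ih => cases i <;> simp [tmMorph_cons, Nat.mul_succ, ih]

theorem iterate_tmMorph_isPrefix_succ (m : ℕ) :
    tmMorph^[m] [false] <+: tmMorph^[m + 1] [false] := by
  induction m with
  | zero => exact ⟨[true], rfl⟩
  | succ m ih =>
    rw [Function.iterate_succ_apply', Function.iterate_succ_apply' _ (m + 1)]
    exact ih.flatMap _

theorem iterate_tmMorph_isPrefix {m k : ℕ} (h : m ≤ k) :
    tmMorph^[m] [false] <+: tmMorph^[k] [false] :=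
  Nat.rel_of_forall_rel_succ_of_le (· <+: ·) iterate_tmMorph_isPrefix_succ h

theorem getElem?_iterate_tmMorph {m n : ℕ} (h : n < 2 ^ m) :
    (tmMorph^[m] [false])[n]? = some (tmWord n) := by
  have lt_length {k : ℕ} (hk : n < 2 ^ k) : n < (tmMorph^[k] [false]).length := by
    simpa [length_iterate_tmMorph] using hk
  have hn : n < 2 ^ (n + 1) := n.lt_succ_self.trans Nat.lt_two_pow_self
  rw [List.getElem?_eq_getElem (lt_length h), tmWord, List.getD_eq_getElem _ _ (lt_length hn)]
  obtain hle | hle := le_total m (n + 1) <;> rw [(iterate_tmMorph_isPrefix hle).getElem]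

theorem tmWord_two_mul (n : ℕ) : tmWord (2 * n) = tmWord n := by
  have hn : n < 2 ^ n := Nat.lt_two_pow_self
  apply Option.some_injective
  rw [← getElem?_iterate_tmMorph hn, ← getElem?_iterate_tmMorph (m := n + 1) (by omega),
    Function.iterate_succ_apply', getElem?_tmMorph_two_mul]

theorem tmWord_two_mul_add_one (n : ℕ) : tmWord (2 * n + 1) = !tmWord n := by
  have hn : n < 2 ^ n := Nat.lt_two_pow_self
  apply Option.some_injective
  rw [← Option.map_some (f := not), ← getElem?_iterate_tmMorph hn,
    ← getElem?_iterate_tmMorph (m := n + 1) (by omega),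
    Function.iterate_succ_apply', getElem?_tmMorph_two_mul_add_one]

theorem exists_tmWord_eq_and_tmWord_add_eq {n : ℕ} (hn : n ≠ 0) (a b : Bool) :
    ∃ k, tmWord k = a ∧ tmWord (k + n) = b := by
  induction n using Nat.strong_induction_on generalizing a b with
  | _ n ih =>
    obtain ⟨m, rfl | rfl⟩ := n.even_or_odd'
    · obtain ⟨k, hk, hkm⟩ := ih m (by omega) (by omega) a b
      exact ⟨2 * k, by rw [tmWord_two_mul, hk], by rw [← mul_add, tmWord_two_mul, hkm]⟩
    · obtain rfl | hm := eq_or_ne m 0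
      · cases a <;> cases b
        exacts [⟨5, by decide⟩, ⟨0, by decide⟩, ⟨2, by decide⟩, ⟨1, by decide⟩]
      · obtain ⟨k, hk, hkm⟩ := ih m (by omega) hm a (!b)
        exact ⟨2 * k, by rw [tmWord_two_mul, hk],
          by rw [← add_assoc, ← mul_add, tmWord_two_mul_add_one, hkm, Bool.not_not]⟩

theorem wordValTM_eq_sum_map (p q : ℕ) (w : List Bool) :
    wordValTM p q w = (w.map (cond · q p)).sum := by
  induction w with
  | nil => simp [wordValTM]
  | cons x w ih =>
    rw [List.map_cons, List.sum_cons, ← ih]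
    cases x <;> simp [wordValTM, add_one_mul, add_assoc, add_comm, add_left_comm]

section LetterSums

open Finset

variable {M : Type*} [AddCommMonoid M]

theorem sum_map_factors_eq_range {A : Type*} (f : ℕ → A) (g : A → M) {L : ℕ} (hL : L ≠ 0) :
    {v | ∃ w, IsFactor f w ∧ w.length = L ∧ (w.map g).sum = v} =
      Set.range fun i => ∑ j ∈ range L, g (f (i + j)) := by
  have sum_map (i : ℕ) : (((List.range L).map fun j => f (i + j)).map g).sum =
      ∑ j ∈ range L, g (f (i + j)) := by
    rw [List.map_map]; rfl
  ext v
  constructor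
  · rintro ⟨w, ⟨-, i, hw⟩, rfl, rfl⟩
    exact ⟨i, by simp only [← sum_map, ← hw]⟩
  · rintro ⟨i, rfl⟩
    exact ⟨_, ⟨by simpa using hL, i, by simp⟩, by simp, sum_map i⟩

variable (g : Bool → M) (k m : ℕ)

theorem sum_tmWord_even_start_even_length :
    ∑ j ∈ range (2 * m), g (tmWord (2 * k + j)) = m • (g false + g true) := by
  have block (x : Bool) : g x + g (!x) = g false + g true := by
    cases x
    exacts [rfl, add_comm _ _]
  induction m with
  | zero => simp
  | succ m ih =>
    rw [Nat.mul_succ, sum_range_succ, sum_range_succ, ih, ← add_assoc, ← mul_add, tmWord_two_mul,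
      tmWord_two_mul_add_one, add_assoc, block, succ_nsmul]

theorem sum_tmWord_even_start_odd_length :
    ∑ j ∈ range (2 * m + 1), g (tmWord (2 * k + j)) =
      m • (g false + g true) + g (tmWord (k + m)) := by
  rw [sum_range_succ, sum_tmWord_even_start_even_length, ← mul_add, tmWord_two_mul]

theorem sum_tmWord_odd_start_odd_length :
    ∑ j ∈ range (2 * m + 1), g (tmWord (2 * k + 1 + j)) =
      m • (g false + g true) + g (!tmWord k) := by
  have shift (j : ℕ) : 2 * k + 1 + (j + 1) = 2 * (k + 1) + j := by ring
  simp only [sum_range_succ', shift, sum_tmWord_even_start_even_length, add_zero,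
    tmWord_two_mul_add_one]

theorem sum_tmWord_odd_start_even_length :
    ∑ j ∈ range (2 * (m + 1)), g (tmWord (2 * k + 1 + j)) =
      m • (g false + g true) + (g (!tmWord k) + g (tmWord (k + (m + 1)))) := by
  have last : 2 * k + 1 + (2 * m + 1) = 2 * (k + (m + 1)) := by ring
  rw [Nat.mul_succ, sum_range_succ, sum_tmWord_odd_start_odd_length, last, tmWord_two_mul,
    add_assoc]

theorem tm_values_by_length_general (n : ℕ) :
    {v | ∃ w ∈ tmLang, w.length = 2 * (n + 1) ∧ (w.map g).sum = v} =
      {v | ∃ a b, v = n • (g false + g true) + (g a + g b)} ∧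
    {v | ∃ w ∈ tmLang, w.length = 2 * n + 1 ∧ (w.map g).sum = v} =
      {v | ∃ a, v = n • (g false + g true) + g a} := by
  refine ⟨(sum_map_factors_eq_range tmWord g (by omega)).trans ?_,
    (sum_map_factors_eq_range tmWord g (by omega)).trans ?_⟩
  · ext v
    constructor
    · rintro ⟨i, rfl⟩
      obtain ⟨k, rfl | rfl⟩ := i.even_or_odd'
      · exact ⟨false, true, (sum_tmWord_even_start_even_length g k (n + 1)).trans (succ_nsmul _ n)⟩
      · exact ⟨_, _, sum_tmWord_odd_start_even_length g k n⟩
    · rintro ⟨a, b, rfl⟩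
      obtain ⟨k, ha, hb⟩ := exists_tmWord_eq_and_tmWord_add_eq n.succ_ne_zero (!a) b
      exact ⟨2 * k + 1, by simp only [sum_tmWord_odd_start_even_length, ha, hb, Bool.not_not]⟩
  · ext v
    constructor
    · rintro ⟨i, rfl⟩
      obtain ⟨k, rfl | rfl⟩ := i.even_or_odd'
      · exact ⟨_, sum_tmWord_even_start_odd_length g k n⟩
      · exact ⟨_, sum_tmWord_odd_start_odd_length g k n⟩
    · rintro ⟨a, rfl⟩
      obtain ⟨k, ha, -⟩ := exists_tmWord_eq_and_tmWord_add_eq one_ne_zero (!a) a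
      exact ⟨2 * k + 1, by simp only [sum_tmWord_odd_start_odd_length, ha, Bool.not_not]⟩

end LetterSums

theorem tm_values_by_length (p q : ℕ) (hp : 0 < p) (hq : 0 < q) (r : ℕ) (hr : r = p + q)
    (n : ℕ) (hn : 1 ≤ n) :
    {v : ℕ | ∃ w ∈ tmLang, w.length = 2 * n ∧ wordValTM p q w = v} =
      {v : ℕ | (v : ℤ) = r * n ∨ (v : ℤ) = r * n + q - p ∨ (v : ℤ) = r * n + p - q} ∧
    {v : ℕ | ∃ w ∈ tmLang, w.length = 2 * n - 1 ∧ wordValTM p q w = v} =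
      {v : ℕ | (v : ℤ) = r * ((n : ℤ) - 1) + p ∨ (v : ℤ) = r * ((n : ℤ) - 1) + q} := by
  obtain ⟨m, rfl⟩ := Nat.exists_eq_add_of_le' hn
  have odd_length : 2 * (m + 1) - 1 = 2 * m + 1 := rfl
  simp only [wordValTM_eq_sum_map, odd_length, tm_values_by_length_general, hr]
  -- With `r = p + q`, the differences arise as `r * (m + 1) + q - p = m * r + 2 * q`, and with
  -- `p` and `q` exchanged.
  constructor <;> ext v <;>
    simp only [Set.mem_ofPred_eq, Bool.exists_bool, cond_false, cond_true, smul_eq_mul] <;>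
    zify <;> grind
end
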